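/- In the CreditRisk⁺ model, for every i = 1,…,n and every nonnegative integer t the identity E_α[N_i 1_{L = t}] = S₀ r_{0,i} P_α[L = t − ν_i] + Σ_{j=1}^k α_j β_j r_{j,i} P_{α(j)}[L = t − ν_i] holds, where P[L = t − ν_i] is interpreted as 0 when t < ν_i. -/

import Mathlib

open MeasureTheory ProbabilityTheory Real

noncomputable section

/-- The gamma measure is sigma-finite (needed to form product measures). -/
instance gammaMeasure.instSigmaFinite (a r : ℝ) :
    SigmaFinite (gammaMeasure a r) := by
  unfold ProbabilityTheory.gammaMeasure ProbabilityTheory.gammaPDF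
  infer_instance

/-- Conditional Poisson intensity `R_i(s) = r_{0,i} S_0 + sum_j r_{j,i} s_j`. -/
def crpR {n k : ℕ} (S0 : ℝ) (r0 : Fin n → ℝ) (r : Fin k → Fin n → ℝ)
    (s : Fin k → ℝ) (i : Fin n) : ℝ :=
  r0 i * S0 + ∑ j, r j i * s j

/-- The CreditRisk⁺ measure `P_α` on `(Fin k → ℝ) × (Fin n → ℕ)`: the product of the
Gamma factor measures (shape `α j`, scale `β j`, i.e. rate `(β j)⁻¹`), composed with the
kernel sending the factor vector `s` to the product of Poisson measures with means `R_i(s)`,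
recorded jointly with `s`. -/
def crpMeasure {n k : ℕ} (S0 : ℝ) (r0 : Fin n → ℝ) (r : Fin k → Fin n → ℝ)
    (α β : Fin k → ℝ) : Measure ((Fin k → ℝ) × (Fin n → ℕ)) :=
  (Measure.pi fun j => gammaMeasure (α j) (β j)⁻¹).bind fun s =>
    (Measure.pi fun i => poissonMeasure (crpR S0 r0 r s i).toNNReal).map fun x => (s, x)

/-- Portfolio loss `L = ∑ ν_i N_i`. -/
def crpLoss {n k : ℕ} (ν : Fin n → ℕ) (x : (Fin k → ℝ) × (Fin n → ℕ)) : ℕ :=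
  ∑ i, ν i * x.2 i

/-- Value-at-risk of the ℕ-valued loss `L` at level `δ`: the smallest `l` with
`P[L ≤ l] ≥ δ` (a natural number since `L` is ℕ-valued). -/
def crpVaR {n k : ℕ} (P : Measure ((Fin k → ℝ) × (Fin n → ℕ)))
    (ν : Fin n → ℕ) (δ : ℝ) : ℕ :=
  sInf {l : ℕ | ENNReal.ofReal δ ≤ P {x | crpLoss ν x ≤ l}}

/-- `ρ_g`, the radius of convergence of the probability generating function. -/
def crpRadius {n k : ℕ} (ν : Fin n → ℕ) (r : Fin k → Fin n → ℝ) (β : Fin k → ℝ) : ℝ :=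
  sSup {z : ℝ | 0 < z ∧ ∀ j, ∑ i, r j i * z ^ ν i < 1 + (β j)⁻¹}

open scoped ENNReal NNReal

/-- Tilting one coordinate of a finite product measure by a density of that coordinate. -/
lemma MeasureTheory.Measure.pi_eq_withDensity_eval {ι : Type*} [Fintype ι] {X : ι → Type*}
    [∀ l, MeasurableSpace (X l)] {μ μ' : ∀ l, Measure (X l)} [∀ l, IsFiniteMeasure (μ l)]
    [∀ l, SigmaFinite (μ' l)] (j : ι) {φ : X j → ℝ≥0∞} (hφ : Measurable φ)
    (hj : μ' j = (μ j).withDensity φ) (hne : ∀ l, l ≠ j → μ' l = μ l) :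
    Measure.pi μ' = (Measure.pi μ).withDensity fun s => φ (s j) := by
  classical
  refine Measure.pi_eq fun A hA => ?_
  have hbox : MeasurableSet (Set.univ.pi A) := .univ_pi hA
  rw [withDensity_apply _ hbox, Measure.restrict_pi_pi,
    ← lintegral_map hφ (measurable_pi_apply j), Measure.pi_map_eval, lintegral_smul_measure,
    ← Finset.prod_erase_mul _ _ (Finset.mem_univ j), hj, withDensity_apply _ (hA j), smul_eq_mul]
  congr 1
  refine Finset.prod_congr rfl fun l hl => ?_
  simp [hne l (Finset.ne_of_mem_erase hl)]

/-- Increasing the shape parameter of a gamma distribution by one is size biasing. -/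
lemma ProbabilityTheory.gammaMeasure_add_one {a b : ℝ} (ha : 0 < a) (hb : 0 < b) :
    gammaMeasure (a + 1) b =
      (gammaMeasure a b).withDensity fun x => ENNReal.ofReal (b / a * x) := by
  have hm : Measurable (gammaPDF a b) := (measurable_gammaPDFReal a b).ennreal_ofReal
  rw [gammaMeasure, gammaMeasure, ← withDensity_mul _ hm (by fun_prop)]
  congr 1
  ext x
  rw [Pi.mul_apply]
  rcases lt_or_ge x 0 with hx | hx
  · simp [gammaPDF_of_neg hx]
  rw [gammaPDF_of_nonneg hx, gammaPDF_of_nonneg hx, ← ENNReal.ofReal_mul (by positivity)]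
  congr 1
  rcases hx.eq_or_lt with rfl | hx
  · simp [ha.ne']
  · rw [Real.Gamma_add_one ha.ne', Real.rpow_add_one hb.ne', add_sub_cancel_right,
      Real.rpow_sub_one hx.ne']
    have := (Real.Gamma_pos_of_pos ha).ne'
    field_simp

lemma ProbabilityTheory.ae_nonneg_gammaMeasure (a b : ℝ) : ∀ᵐ x ∂gammaMeasure a b, 0 ≤ x := by
  have h : {x : ℝ | ¬ 0 ≤ x} = Set.Iio 0 := by ext; simp
  rw [ae_iff, h, gammaMeasure, withDensity_apply _ measurableSet_Iio,
    lintegral_gammaPDF_of_nonpos le_rfl]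

lemma ProbabilityTheory.succ_mul_poissonMeasure_singleton (lam : ℝ≥0) (m : ℕ) :
    ((m + 1 : ℕ) : ℝ≥0∞) * poissonMeasure lam {m + 1} = lam * poissonMeasure lam {m} := by
  rw [poissonMeasure_singleton, poissonMeasure_singleton, ← ENNReal.ofReal_natCast,
    ← ENNReal.ofReal_coe_nnreal, ← ENNReal.ofReal_mul (by positivity),
    ← ENNReal.ofReal_mul (by positivity)]
  congr 1
  rw [Nat.factorial_succ]
  push_cast
  field_simp
  ring

/-- The Chen–Stein identity for one coordinate of a vector of independent Poisson variables. -/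
lemma ProbabilityTheory.lintegral_coord_mul_pi_poissonMeasure {ι : Type*} [Fintype ι]
    [DecidableEq ι] (lam : ι → ℝ≥0) (g : (ι → ℕ) → ℝ≥0∞) (i : ι) :
    ∫⁻ x, x i * g x ∂(Measure.pi fun l => poissonMeasure (lam l)) =
      lam i * ∫⁻ x, g (x + Pi.single i 1) ∂(Measure.pi fun l => poissonMeasure (lam l)) := by
  rw [lintegral_countable', lintegral_countable', ← ENNReal.tsum_mul_left,
    ← (add_left_injective (Pi.single i 1 : ι → ℕ)).tsum_eq]
  · refine tsum_congr fun x => ?_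
    simp only [Measure.pi_singleton, ← Finset.mul_prod_erase _ _ (Finset.mem_univ i)]
    have herase : ∏ l ∈ Finset.univ.erase i,
        poissonMeasure (lam l) {(x + Pi.single i 1 : ι → ℕ) l} =
        ∏ l ∈ Finset.univ.erase i, poissonMeasure (lam l) {x l} :=
      Finset.prod_congr rfl fun l hl => by simp [Finset.ne_of_mem_erase hl]
    have hi : (x + Pi.single i 1 : ι → ℕ) i = x i + 1 := by simp
    rw [herase, hi, mul_right_comm, ← mul_assoc, succ_mul_poissonMeasure_singleton]
    ring
  · intro x hx
    have hxi : x i ≠ 0 := by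
      rintro h
      simp [h] at hx
    refine ⟨x - Pi.single i 1, ?_⟩
    ext l
    rcases eq_or_ne l i with rfl | hl
    · simp; omega
    · simp [hl]

lemma measurable_crpR {n k : ℕ} (S0 : ℝ) (r0 : Fin n → ℝ) (r : Fin k → Fin n → ℝ) (i : Fin n) :
    Measurable fun s => crpR S0 r0 r s i := by
  unfold crpR
  fun_prop

lemma measurable_pi_poissonMeasure_crpR {n k : ℕ} (S0 : ℝ) (r0 : Fin n → ℝ)
    (r : Fin k → Fin n → ℝ) :
    Measurable fun s => Measure.pi fun i => poissonMeasure (crpR S0 r0 r s i).toNNReal := by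
  refine Measure.measurable_of_measurable_coe _ fun A hA => ?_
  simp_rw [← lintegral_indicator_one hA, lintegral_countable', Measure.pi_singleton,
    poissonMeasure_singleton]
  have := measurable_crpR S0 r0 r
  fun_prop

/-- Expectations of functions of the counts, by conditioning on the factors. -/
lemma lintegral_crpMeasure {n k : ℕ} (S0 : ℝ) (r0 : Fin n → ℝ) (r : Fin k → Fin n → ℝ)
    (α β : Fin k → ℝ) (g : (Fin n → ℕ) → ℝ≥0∞) :
    ∫⁻ x, g x.2 ∂(crpMeasure S0 r0 r α β) =
      ∫⁻ s, ∫⁻ x, g x ∂(Measure.pi fun i => poissonMeasure (crpR S0 r0 r s i).toNNReal)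
        ∂(Measure.pi fun j => gammaMeasure (α j) (β j)⁻¹) := by
  have hg : Measurable fun x : (Fin k → ℝ) × (Fin n → ℕ) => g x.2 :=
    (measurable_of_countable g).comp measurable_snd
  have hκ : Measurable fun s => (Measure.pi fun i =>
      poissonMeasure (crpR S0 r0 r s i).toNNReal).map fun x => (s, x) := by
    refine Measure.measurable_of_measurable_coe _ fun A hA => ?_
    have hpi (s : Fin k → ℝ) : ((Measure.pi fun i =>
        poissonMeasure (crpR S0 r0 r s i).toNNReal).map fun x => (s, x)) A =
        ∑' x, A.indicator 1 (s, x) *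
          (Measure.pi fun i => poissonMeasure (crpR S0 r0 r s i).toNNReal) {x} := by
      rw [← lintegral_indicator_one hA, lintegral_map (measurable_one.indicator hA) (by fun_prop),
        lintegral_countable']
    simp_rw [hpi]
    refine Measurable.tsum fun x => Measurable.mul ?_ ?_
    · exact (measurable_one.indicator hA).comp (by fun_prop)
    · exact (Measure.measurable_coe (measurableSet_singleton x)).comp
        (measurable_pi_poissonMeasure_crpR S0 r0 r)
  rw [crpMeasure, Measure.lintegral_bind hκ.aemeasurable hg.aemeasurable]
  refine lintegral_congr fun s => ?_
  rw [lintegral_map hg (by fun_prop)]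

/-- Size biasing the factor `j` amounts to raising its shape parameter by one. -/
lemma lintegral_factor_mul {k : ℕ} {α β : Fin k → ℝ} (hα : ∀ j, 0 < α j) (hβ : ∀ j, 0 < β j)
    (j : Fin k) {h : (Fin k → ℝ) → ℝ≥0∞} (hh : Measurable h) :
    ∫⁻ s, ENNReal.ofReal (s j) * h s ∂(Measure.pi fun l => gammaMeasure (α l) (β l)⁻¹) =
      ENNReal.ofReal (α j * β j) * ∫⁻ s, h s
        ∂(Measure.pi fun l => gammaMeasure (Function.update α j (α j + 1) l) (β l)⁻¹) := by
  have hprob (l) : IsProbabilityMeasure (gammaMeasure (α l) (β l)⁻¹) :=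
    isProbabilityMeasure_gammaMeasure (hα l) (inv_pos.2 (hβ l))
  have hj := hα j
  have hj' := hβ j
  have hφ : Measurable fun x : ℝ => ENNReal.ofReal ((β j)⁻¹ / α j * x) := by fun_prop
  rw [Measure.pi_eq_withDensity_eval (μ := fun l => gammaMeasure (α l) (β l)⁻¹)
      (μ' := fun l => gammaMeasure (Function.update α j (α j + 1) l) (β l)⁻¹) j hφ
      (by simpa using gammaMeasure_add_one hj (inv_pos.2 hj'))
      (fun l hl => by simp [Function.update_of_ne hl]),
    lintegral_withDensity_eq_lintegral_mul _ (by fun_prop) hh,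
    ← lintegral_const_mul _ (by fun_prop)]
  refine lintegral_congr fun s => ?_
  rw [Pi.mul_apply, ← mul_assoc, ← ENNReal.ofReal_mul (by positivity)]
  congr 2
  field_simp

/-- The numerator identity for an arbitrary functional of the counts. -/
lemma lintegral_count_mul_crpMeasure {n k : ℕ} {S0 : ℝ} (hS0 : 0 ≤ S0)
    {r0 : Fin n → ℝ} {r : Fin k → Fin n → ℝ} (hr0 : ∀ i, 0 ≤ r0 i) (hr : ∀ j i, 0 ≤ r j i)
    {α β : Fin k → ℝ} (hα : ∀ j, 0 < α j) (hβ : ∀ j, 0 < β j) (i : Fin n)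
    (g : (Fin n → ℕ) → ℝ≥0∞) :
    ∫⁻ x, x.2 i * g x.2 ∂(crpMeasure S0 r0 r α β) =
      ENNReal.ofReal (S0 * r0 i) *
          ∫⁻ x, g (x.2 + Pi.single i 1) ∂(crpMeasure S0 r0 r α β) +
        ∑ j, ENNReal.ofReal (α j * β j * r j i) * ∫⁻ x, g (x.2 + Pi.single i 1)
          ∂(crpMeasure S0 r0 r (Function.update α j (α j + 1)) β) := by
  simp_rw [lintegral_crpMeasure S0 r0 r _ β fun x => x i * g x,
    lintegral_crpMeasure S0 r0 r _ β fun x => g (x + Pi.single i 1),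
    lintegral_coord_mul_pi_poissonMeasure]
  set h : (Fin k → ℝ) → ℝ≥0∞ := fun s => ∫⁻ x, g (x + Pi.single i 1)
    ∂(Measure.pi fun i => poissonMeasure (crpR S0 r0 r s i).toNNReal)
  have hh : Measurable h :=
    (Measure.measurable_lintegral (measurable_of_countable _)).comp
      (measurable_pi_poissonMeasure_crpR S0 r0 r)
  have hnonneg : ∀ᵐ s ∂(Measure.pi fun j => gammaMeasure (α j) (β j)⁻¹), ∀ j, 0 ≤ s j :=
    ae_all_iff.2 fun j => (Measure.tendsto_eval_ae_ae (i := j)).eventually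
      (ae_nonneg_gammaMeasure (α j) (β j)⁻¹)
  have hsplit : (fun s => ((crpR S0 r0 r s i).toNNReal : ℝ≥0∞) * h s)
      =ᵐ[Measure.pi fun j => gammaMeasure (α j) (β j)⁻¹] fun s =>
        ENNReal.ofReal (S0 * r0 i) * h s +
          ∑ j, ENNReal.ofReal (r j i) * (ENNReal.ofReal (s j) * h s) := by
    filter_upwards [hnonneg] with s hs
    change ENNReal.ofReal (crpR S0 r0 r s i) * h s = _
    rw [crpR, ENNReal.ofReal_add (mul_nonneg (hr0 i) hS0)
        (Finset.sum_nonneg fun j _ => mul_nonneg (hr j i) (hs j)),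
      ENNReal.ofReal_sum_of_nonneg fun j _ => mul_nonneg (hr j i) (hs j), add_mul,
      Finset.sum_mul, mul_comm (r0 i)]
    simp_rw [ENNReal.ofReal_mul (hr _ i), mul_assoc]
  rw [lintegral_congr_ae hsplit, lintegral_add_left (by fun_prop),
    lintegral_const_mul _ hh, lintegral_finsetSum _ (by fun_prop)]
  congr 1
  refine Finset.sum_congr rfl fun j _ => ?_
  rw [lintegral_const_mul _ (by fun_prop), lintegral_factor_mul hα hβ j hh, ← mul_assoc,
    ← ENNReal.ofReal_mul (hr j i), mul_comm (r j i)]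

lemma isProbabilityMeasure_crpMeasure {n k : ℕ} (S0 : ℝ) (r0 : Fin n → ℝ)
    (r : Fin k → Fin n → ℝ) {α β : Fin k → ℝ} (hα : ∀ j, 0 < α j) (hβ : ∀ j, 0 < β j) :
    IsProbabilityMeasure (crpMeasure S0 r0 r α β) := by
  have hprob (l) : IsProbabilityMeasure (gammaMeasure (α l) (β l)⁻¹) :=
    isProbabilityMeasure_gammaMeasure (hα l) (inv_pos.2 (hβ l))
  constructor
  rw [← lintegral_one, lintegral_crpMeasure S0 r0 r α β fun _ => 1]
  simp

/-- for each `i` and each `t ∈ ℕ`,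
`E_α[N_i 1_{L=t}] = S₀ r_{0,i} P_α[L = t − ν_i] + ∑_j α_j β_j r_{j,i} P_{α(j)}[L = t − ν_i]`,
with `P[L = t − ν_i]` interpreted as `0` when `t < ν_i`. -/
theorem crp_numerator_identity {n k : ℕ} (hn : 0 < n) (hk : 0 < k)
    (ν : Fin n → ℕ) (hν : ∀ i, 0 < ν i)
    (S0 : ℝ) (hS0 : 0 ≤ S0)
    (r0 : Fin n → ℝ) (r : Fin k → Fin n → ℝ)
    (hr0 : ∀ i, 0 ≤ r0 i) (hr : ∀ j i, 0 ≤ r j i)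
    (hr0sum : ∑ i, r0 i = 1) (hrsum : ∀ j, ∑ i, r j i = 1)
    (hrpos : ∀ i, 0 < ∑ j, r j i)
    (α β : Fin k → ℝ) (hα : ∀ j, 0 < α j) (hβ : ∀ j, 0 < β j)
    (i : Fin n) (t : ℕ) :
    ∫ x in {y | crpLoss ν y = t}, (x.2 i : ℝ) ∂(crpMeasure S0 r0 r α β)
      = S0 * r0 i *
          (if ν i ≤ t then
            ((crpMeasure S0 r0 r α β) {x | crpLoss ν x = t - ν i}).toReal else 0)
        + ∑ j, α j * β j * r j i *
          (if ν i ≤ t then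
            ((crpMeasure S0 r0 r (Function.update α j (α j + 1)) β)
              {x | crpLoss ν x = t - ν i}).toReal else 0) := by
  have hloss (u : ℕ) : MeasurableSet {x : (Fin k → ℝ) × (Fin n → ℕ) | crpLoss ν x = u} :=
    measurable_snd (Set.to_countable {x : Fin n → ℕ | ∑ l, ν l * x l = u}).measurableSet
  set g : (Fin n → ℕ) → ℝ≥0∞ := fun x => if ∑ l, ν l * x l = t then 1 else 0
  have hlhs : ∫ x in {y | crpLoss ν y = t}, (x.2 i : ℝ) ∂(crpMeasure S0 r0 r α β) =
      (∫⁻ x, x.2 i * g x.2 ∂(crpMeasure S0 r0 r α β)).toReal := by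
    rw [integral_eq_lintegral_of_nonneg_ae (ae_of_all _ fun x => by positivity)
        (by fun_prop), ← lintegral_indicator (hloss t)]
    congr 1
    refine lintegral_congr fun x => ?_
    by_cases hx : ∑ l, ν l * x.2 l = t <;> simp [Set.indicator, crpLoss, g, hx]
  have hsum (x : Fin n → ℕ) : ∑ l, ν l * (x + Pi.single i 1 : Fin n → ℕ) l =
      ∑ l, ν l * x l + ν i := by
    simp [mul_add, Finset.sum_add_distrib, Pi.single_apply]
  have hshift (a : Fin k → ℝ) :
      ∫⁻ x, g (x.2 + Pi.single i 1) ∂(crpMeasure S0 r0 r a β) =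
        if ν i ≤ t then crpMeasure S0 r0 r a β {x | crpLoss ν x = t - ν i} else 0 := by
    split_ifs with ht
    · rw [← lintegral_indicator_one (hloss _)]
      refine lintegral_congr fun x => ?_
      have : ∑ l, ν l * x.2 l + ν i = t ↔ ∑ l, ν l * x.2 l = t - ν i := by omega
      simp only [g, hsum, this, Set.indicator, crpLoss, Set.mem_ofPred_eq, Pi.one_apply]
      congr
    · have (x : Fin n → ℕ) : ∑ l, ν l * x l + ν i ≠ t := by omega
      simp only [g, hsum, this, if_false, lintegral_zero]
  have hα' (j l : Fin k) : 0 < Function.update α j (α j + 1) l := by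
    rcases eq_or_ne l j with rfl | hl
    · simpa using (hα l).trans (lt_add_one _)
    · simpa [hl] using hα l
  have := isProbabilityMeasure_crpMeasure S0 r0 r hα hβ
  have (j : Fin k) := isProbabilityMeasure_crpMeasure S0 r0 r (hα' j) hβ
  have hcoef (j : Fin k) : 0 ≤ α j * β j * r j i :=
    mul_nonneg (mul_pos (hα j) (hβ j)).le (hr j i)
  have hfin (a : Fin k → ℝ) [IsFiniteMeasure (crpMeasure S0 r0 r a β)] (c : ℝ) :
      ENNReal.ofReal c * (if ν i ≤ t then
        crpMeasure S0 r0 r a β {x | crpLoss ν x = t - ν i} else 0) ≠ ∞ :=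
    ENNReal.mul_ne_top ENNReal.ofReal_ne_top (by split_ifs <;> simp)
  rw [hlhs, lintegral_count_mul_crpMeasure hS0 hr0 hr hα hβ]
  simp_rw [hshift]
  rw [ENNReal.toReal_add (hfin α _) (ENNReal.sum_ne_top.2 fun j _ => hfin _ _),
    ENNReal.toReal_sum fun j _ => hfin _ _]
  simp only [ENNReal.toReal_mul, ENNReal.toReal_ofReal (mul_nonneg hS0 (hr0 i)),
    ENNReal.toReal_ofReal (hcoef _), apply_ite ENNReal.toReal, ENNReal.toReal_zero]
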